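/- Let G be a graph with independence number α = α(G) and let t ≥ 8·4^α be an integer. Let M be a perfect matching of G and 𝒞 a set of vertex-disjoint M-alternating cycles such that |𝒞| ≤ 10t³, |w_M(C)| ≤ 2t for every C ∈ 𝒞, and the cycles of 𝒞 contain at least 1000t⁶ blue edges and at least 1000t⁶ red edges in total. Then 𝒞 contains a 0-skip set. -/

import Mathlib

open Finset

/-- `M` is (the edge set of) a perfect matching of `G`: all its edges are edges of `G` and
every vertex belongs to exactly one edge of `M`. -/
def IsPM {V : Type*} [DecidableEq V] (G : SimpleGraph V) (M : Finset (Sym2 V)) : Prop :=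
  ↑M ⊆ G.edgeSet ∧ ∀ v : V, ∃! e, e ∈ M ∧ v ∈ e

/-- Number of red edges in the edge set `F` (the coloring `red` marks the red edges). -/
def redCount {V : Type*} [DecidableEq V] (red : Sym2 V → Bool) (F : Finset (Sym2 V)) : ℕ :=
  (F.filter fun e => red e = true).card

/-- Number of blue edges in the edge set `F`. -/
def blueCount {V : Type*} [DecidableEq V] (red : Sym2 V → Bool) (F : Finset (Sym2 V)) : ℕ :=
  (F.filter fun e => red e = false).card

/-- The weight `w_M(e)`: 0 for blue edges, +1 for red non-matching edges, −1 for red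
matching edges. -/
def wt {V : Type*} [DecidableEq V] (red : Sym2 V → Bool) (M : Finset (Sym2 V))
    (e : Sym2 V) : ℤ :=
  if red e then (if e ∈ M then -1 else 1) else 0

/-- `w_M(F)`, the total weight of an edge set `F`. -/
def wSum {V : Type*} [DecidableEq V] (red : Sym2 V → Bool) (M F : Finset (Sym2 V)) : ℤ :=
  ∑ e ∈ F, wt red M e

/-- A list of edges alternates with respect to the matching `M`: consecutive edges are
alternately in and out of `M`. -/
def altList {V : Type*} [DecidableEq V] (M : Finset (Sym2 V)) (l : List (Sym2 V)) : Prop :=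
  l.Chain' fun e f => ¬((e ∈ M) ↔ (f ∈ M))

/-- `C` is (the edge set of) an `M`-alternating cycle in `G`: it is traced by a cycle walk
whose edges alternate (cyclically) between `M` and non-`M` edges. -/
def IsAltCycle {V : Type*} [DecidableEq V] (G : SimpleGraph V)
    (M C : Finset (Sym2 V)) : Prop :=
  ∃ (v : V) (p : G.Walk v v), p.IsCycle ∧ p.edges.toFinset = C ∧
    altList M (p.edges ++ p.edges.take 1)

/-- `P` is (the edge set of) an `M`-alternating path in `G`. -/
def IsAltPath {V : Type*} [DecidableEq V] (G : SimpleGraph V)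
    (M P : Finset (Sym2 V)) : Prop :=
  ∃ (u v : V) (p : G.Walk u v), p.IsPath ∧ p.edges.toFinset = P ∧ altList M p.edges

/-- The symmetric difference of two edge sets. -/
def sd {V : Type*} [DecidableEq V] (M M' : Finset (Sym2 V)) : Finset (Sym2 V) :=
  (M \ M') ∪ (M' \ M)

/-- The set of vertices covered by an edge set. -/
def edgeVerts {V : Type*} (F : Finset (Sym2 V)) : Set V := {v | ∃ e ∈ F, v ∈ e}

/-- `𝒞` is a set of pairwise vertex-disjoint `M`-alternating cycles of `G`. -/
def IsAltCycleSet {V : Type*} [DecidableEq V] (G : SimpleGraph V) (M : Finset (Sym2 V))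
    (𝒞 : Finset (Finset (Sym2 V))) : Prop :=
  (∀ C ∈ 𝒞, IsAltCycle G M C) ∧
    (𝒞 : Set (Finset (Sym2 V))).Pairwise fun C C' => Disjoint (edgeVerts C) (edgeVerts C')

/-- A skip on the `M`-alternating cycle `C` (with respect to the coloring `red`):
two non-matching chords `e1 ≠ e2` of `C`, not edges of `C`, such that replacing two
stretches of `C` by them yields a strictly shorter `M`-alternating cycle `C'` whose weight
differs from that of `C` by at most 4 in absolute value. -/
structure Skip {V : Type*} [DecidableEq V] (G : SimpleGraph V) (red : Sym2 V → Bool)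
    (M C : Finset (Sym2 V)) where
  e1 : Sym2 V
  e2 : Sym2 V
  C' : Finset (Sym2 V)
  hne : e1 ≠ e2
  he1G : e1 ∈ G.edgeSet
  he2G : e2 ∈ G.edgeSet
  he1M : e1 ∉ M
  he2M : e2 ∉ M
  he1C : e1 ∉ C
  he2C : e2 ∉ C
  halt : IsAltCycle G M C'
  hmem1 : e1 ∈ C'
  hmem2 : e2 ∈ C'
  hsub : C' \ {e1, e2} ⊆ C
  hsmall : C'.card < C.card
  hwbound : |wSum red M C' - wSum red M C| ≤ 4

/-- The weight `w(S) = w_M(C') − w_M(C)` of a skip. -/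
def Skip.w {V : Type*} [DecidableEq V] {G : SimpleGraph V} {red : Sym2 V → Bool}
    {M C : Finset (Sym2 V)} (S : Skip G red M C) : ℤ :=
  wSum red M S.C' - wSum red M C

/-- The skip `S` is contained in the path `P` along `C`: the stretch of `C` removed by
the skip lies on `P`. -/
def Skip.In {V : Type*} [DecidableEq V] {G : SimpleGraph V} {red : Sym2 V → Bool}
    {M C : Finset (Sym2 V)} (S : Skip G red M C) (P : Finset (Sym2 V)) : Prop :=
  C \ S.C' ⊆ P

/-- Two skips on `C` are disjoint: they are contained in disjoint paths along `C`. -/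
def Skip.Disj {V : Type*} [DecidableEq V] {G : SimpleGraph V} {red : Sym2 V → Bool}
    {M C : Finset (Sym2 V)} (S1 S2 : Skip G red M C) : Prop :=
  ∃ P1 P2 : Finset (Sym2 V), P1 ⊆ C ∧ P2 ⊆ C ∧ Disjoint P1 P2 ∧
    IsAltPath G M P1 ∧ IsAltPath G M P2 ∧ S1.In P1 ∧ S2.In P2

/-- A skip living on one of the cycles of the family `𝒞`. -/
structure SkipOn {V : Type*} [DecidableEq V] (G : SimpleGraph V) (red : Sym2 V → Bool)
    (M : Finset (Sym2 V)) (𝒞 : Finset (Finset (Sym2 V))) where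
  C : Finset (Sym2 V)
  hC : C ∈ 𝒞
  S : Skip G red M C

/-- Two skips on cycles of `𝒞` are disjoint: either they live on different
(vertex-disjoint) cycles, or they are disjoint skips on the same cycle. -/
def SkipOn.Disj {V : Type*} [DecidableEq V] {G : SimpleGraph V} {red : Sym2 V → Bool}
    {M : Finset (Sym2 V)} {𝒞 : Finset (Finset (Sym2 V))}
    (T1 T2 : SkipOn G red M 𝒞) : Prop :=
  T1.C ≠ T2.C ∨ ∃ h : T1.C = T2.C, Skip.Disj (h ▸ T1.S) T2.S

/-- `𝒞` contains a 0-skip set: a nonempty collection of pairwise disjoint skips on cycles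
of `𝒞` of total weight 0. -/
def HasZeroSkipSet {V : Type*} [DecidableEq V] (G : SimpleGraph V) (red : Sym2 V → Bool)
    (M : Finset (Sym2 V)) (𝒞 : Finset (Finset (Sym2 V))) : Prop :=
  ∃ L : List (SkipOn G red M 𝒞), L ≠ [] ∧ L.Pairwise SkipOn.Disj ∧
    (L.map fun T => T.S.w).sum = 0

/-- `𝒞` contains a 0-skip-cycle set: a nonempty collection of pairwise disjoint skips on
cycles of `𝒞` and/or whole cycles `D ⊆ 𝒞` (the skips living on cycles not in `D`), such
that the total weight of the skips minus the total weight of the cycles is 0. -/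
def HasZeroSkipCycleSet {V : Type*} [DecidableEq V] (G : SimpleGraph V)
    (red : Sym2 V → Bool) (M : Finset (Sym2 V)) (𝒞 : Finset (Finset (Sym2 V))) : Prop :=
  ∃ (L : List (SkipOn G red M 𝒞)) (D : Finset (Finset (Sym2 V))),
    D ⊆ 𝒞 ∧ (L ≠ [] ∨ D.Nonempty) ∧ L.Pairwise SkipOn.Disj ∧ (∀ T ∈ L, T.C ∉ D) ∧
      (L.map fun T => T.S.w).sum - (∑ C ∈ D, wSum red M C) = 0

/-- The independence number `α(G)`: the maximum size of a set of pairwise non-adjacent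
vertices. -/
noncomputable def indepNum {V : Type*} (G : SimpleGraph V) : ℕ :=
  sSup {n | ∃ s : Finset V, s.card = n ∧ (s : Set V).Pairwise fun u v => ¬ G.Adj u v}

/-- `RamseyProp N s t`: every graph on `N` vertices contains a clique of size `s` or an
independent set of size `t`. -/
def RamseyProp (N s t : ℕ) : Prop :=
  ∀ H : SimpleGraph (Fin N),
    (∃ A : Finset (Fin N), A.card = s ∧ (A : Set (Fin N)).Pairwise H.Adj) ∨
    (∃ B : Finset (Fin N), B.card = t ∧ (B : Set (Fin N)).Pairwise fun u v => ¬ H.Adj u v)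

/-- The Ramsey number `R(s,t)`: the smallest `N` such that every graph on `N` vertices
contains a clique of size `s` or an independent set of size `t`. -/
noncomputable def ramsey (s t : ℕ) : ℕ := sInf {N | RamseyProp N s t}

/-!
Trace an alternating cycle by its vertices `c 0, c 1, …` with `c 0 c 1` a matching edge, and
consider the stretches of three edges from `c (2x + 1)` to `c (2x + 4)`. Each has two
non-matching edges and one matching edge, hence weight between `-1` and `2`. If both the starting
points and the end points of the stretches `x` and `y` are adjacent, then replacing the two
stretches by these two chords, with the part of the cycle between them reversed, is a skip; its
weight is that of the chords, `0` to `2`, minus that of the stretches. The bound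
`R(α + 1, α + 1) ≤ 4 ^ α` provides such a pair among any `4 ^ α` stretches: a set of stretches
with pairwise adjacent starting points and more than `α` elements contains two with adjacent end
points.

Summing the weights of all stretches shows that a cycle of small weight with many red edges has many
stretches of weight at least `1`, which give disjoint skips of weight at most `0`, and one with many
blue edges has many stretches of weight at most `0`, which give disjoint skips of weight at least
`0`. If both kinds come from the same cycle, splitting it at two medians separates them.
As skip weights are bounded by `4`, seventeen skips of each sign contain a subfamily of weight `0`.
-/

section Ramsey

variable {ι V : Type*}

theorem exists_isNClique_or_isNIndepSet (H : SimpleGraph ι) :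
    ∀ (p q : ℕ) (S : Finset ι), 2 ^ (p + q) ≤ #S →
      (∃ T ⊆ S, H.IsNClique (p + 1) T) ∨ ∃ T ⊆ S, H.IsNIndepSet (q + 1) T
  | 0, q, S, hS => by
    obtain ⟨v, hv⟩ := card_pos.1 ((Nat.two_pow_pos _).trans_le hS)
    exact .inl ⟨{v}, by simpa, by simp [SimpleGraph.isNClique_iff]⟩
  | p + 1, 0, S, hS => by
    obtain ⟨v, hv⟩ := card_pos.1 ((Nat.two_pow_pos _).trans_le hS)
    exact .inr ⟨{v}, by simpa, by simp [SimpleGraph.isNIndepSet_iff, SimpleGraph.IsIndepSet]⟩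
  | p + 1, q + 1, S, hS => by
    classical
    obtain ⟨v, hv⟩ := card_pos.1 ((Nat.two_pow_pos _).trans_le hS)
    have hsplit : #{u ∈ S.erase v | H.Adj v u} + #{u ∈ S.erase v | ¬H.Adj v u} = #S - 1 := by
      rw [card_filter_add_card_filter_not, card_erase_of_mem hv]
    rw [show p + 1 + (q + 1) = p + q + 1 + 1 by ring, pow_succ] at hS
    have hsub : ∀ (P : ι → Prop) [DecidablePred P], (S.erase v).filter P ⊆ S := fun P _ =>
      (filter_subset _ _).trans (erase_subset _ _)
    by_cases hadj : 2 ^ (p + q + 1) ≤ #{u ∈ S.erase v | H.Adj v u}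
    · obtain ⟨T, hTS, hT⟩ | ⟨T, hTS, hT⟩ := exists_isNClique_or_isNIndepSet H p (q + 1) _ hadj
      · exact .inl ⟨insert v T, insert_subset hv (hTS.trans (hsub _)),
          hT.insert fun u hu => (mem_filter.1 (hTS hu)).2⟩
      · exact .inr ⟨T, hTS.trans (hsub _), hT⟩
    · obtain ⟨T, hTS, hT⟩ | ⟨T, hTS, hT⟩ := exists_isNClique_or_isNIndepSet H (p + 1) q
        {u ∈ S.erase v | ¬H.Adj v u} (by rw [add_right_comm]; omega)
      · exact .inl ⟨T, hTS.trans (hsub _), hT⟩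
      · rw [← SimpleGraph.isNClique_compl H] at hT
        refine .inr ⟨insert v T, insert_subset hv (hTS.trans (hsub _)),
          (SimpleGraph.isNClique_compl H).1 (hT.insert fun u hu => ?_)⟩
        have := mem_filter.1 (hTS hu)
        exact ⟨(ne_of_mem_erase this.1).symm, this.2⟩

theorem card_le_of_isIndepSet_comap {G : SimpleGraph V} {α : ℕ}
    (hα : ∀ s : Finset V, G.IsIndepSet s → #s ≤ α) {a : ι → V} {T : Finset ι}
    (ha : Set.InjOn a T) (hT : (G.comap a).IsIndepSet T) : #T ≤ α := by
  classical
  rw [← card_image_of_injOn ha]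
  refine hα _ ?_
  rw [SimpleGraph.IsIndepSet, coe_image, ha.pairwise_image]
  exact hT

theorem card_lt_of_isIndepSet_comap_inf_comap {G : SimpleGraph V} {α : ℕ}
    (hα : ∀ s : Finset V, G.IsIndepSet s → #s ≤ α) {a b : ι → V} {S : Finset ι}
    (ha : Set.InjOn a S) (hb : Set.InjOn b S)
    (hS : (G.comap a ⊓ G.comap b).IsIndepSet S) : #S < 4 ^ α := by
  classical
  by_contra! hcard
  rw [show 4 = 2 ^ 2 by rfl, ← pow_mul, two_mul] at hcard
  obtain ⟨T, hTS, hT⟩ | ⟨T, hTS, hT⟩ := exists_isNClique_or_isNIndepSet (G.comap a) α α S hcard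
  · have hTb : (G.comap b).IsIndepSet T := fun u hu v hv huv hadj =>
      hS (hTS hu) (hTS hv) huv ⟨hT.isClique hu hv huv, hadj⟩
    have := card_le_of_isIndepSet_comap hα (hb.mono hTS) hTb
    exact absurd hT.card_eq (by omega)
  · have := card_le_of_isIndepSet_comap hα (ha.mono hTS) hT.isIndepSet
    exact absurd hT.card_eq (by omega)

end Ramsey

section SeparatedPositions

theorem exists_spaced_sequence {A : Finset ℕ} {n : ℕ} (hA : 2 * n ≤ #A) :
    ∃ b : Fin n → ℕ, (∀ i, b i ∈ A) ∧ ∀ i j, i < j → b i + 2 ≤ b j := by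
  let a := A.orderEmbOfFin rfl
  refine ⟨fun i => a ⟨2 * i, by omega⟩, fun i => A.orderEmbOfFin_mem rfl _, fun i j hij => ?_⟩
  have h₁ : a ⟨2 * i, by omega⟩ < a ⟨2 * i + 1, by omega⟩ := a.strictMono (by simp)
  have h₂ : a ⟨2 * i + 1, by omega⟩ < a ⟨2 * j, by omega⟩ :=
    a.strictMono (Fin.mk_lt_mk.2 (by omega))
  simp only
  omega

theorem exists_separated_edges {H : SimpleGraph ℕ} {A : Finset ℕ} {R m : ℕ}
    (hH : ∀ S ⊆ A, H.IsIndepSet S → #S < R) (hA : 2 * (m * R) ≤ #A) :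
    ∃ x y : Fin m → ℕ, (∀ i, x i ∈ A) ∧ (∀ i, y i ∈ A) ∧ (∀ i, x i + 2 ≤ y i) ∧
      (∀ i, H.Adj (x i) (y i)) ∧ ∀ i j, i < j → y i + 2 ≤ x j := by
  obtain ⟨b, hbA, hb⟩ := exists_spaced_sequence hA
  have hb_inj : b.Injective := StrictMono.injective fun i j hij =>
    (Nat.lt_add_of_pos_right two_pos).trans_le (hb i j hij)
  let block (i : Fin m) : Finset ℕ := univ.image fun r : Fin R => b (finProdFinEquiv (i, r))
  have hblock : ∀ i, ∃ r s : Fin R, r < s ∧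
      H.Adj (b (finProdFinEquiv (i, r))) (b (finProdFinEquiv (i, s))) := by
    intro i
    by_contra! hindep
    have hinj : Function.Injective fun r : Fin R => b (finProdFinEquiv (i, r)) :=
      hb_inj.comp (finProdFinEquiv.injective.comp (Prod.mk_right_injective i))
    have hcard : #(block i) = R := by simp [block, card_image_of_injective _ hinj]
    refine (hH (block i) (image_subset_iff.2 fun r _ => hbA _) ?_).ne hcard
    simp only [SimpleGraph.IsIndepSet, block, coe_image, coe_univ, Set.image_univ]
    rintro _ ⟨r, rfl⟩ _ ⟨s, rfl⟩ hne hadj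
    obtain hrs | hrs := lt_or_gt_of_ne fun h : r = s => hne (by rw [h])
    · exact hindep r s hrs hadj
    · exact hindep s r hrs hadj.symm
  choose r s hrs hadj using hblock
  refine ⟨_, _, fun i => hbA _, fun i => hbA _, fun i => hb _ _ ?_, hadj, fun i j hij => hb _ _ ?_⟩
  · have := hrs i
    simp only [Fin.lt_def, finProdFinEquiv_apply_val] at this ⊢
    omega
  · have hij' : (i : ℕ) + 1 ≤ j := hij
    have := Nat.mul_le_mul_left R hij'
    have := (s i).isLt
    simp only [Fin.lt_def, finProdFinEquiv_apply_val]
    nlinarith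

theorem exists_median {A : Finset ℕ} {n : ℕ} (hA : 2 * n + 1 ≤ #A) :
    ∃ c, n ≤ #{x ∈ A | x < c} ∧ n ≤ #{x ∈ A | c < x} := by
  let a := A.orderEmbOfFin rfl
  let i : Fin #A := ⟨n, by omega⟩
  refine ⟨a i, ?_, ?_⟩
  · calc n = #((Iio i).map a.toEmbedding) := by simp [i]
      _ ≤ _ := card_le_card fun x hx => by
        obtain ⟨j, hj, rfl⟩ := mem_map.1 hx
        exact mem_filter.2 ⟨A.orderEmbOfFin_mem rfl j, a.strictMono (mem_Iio.1 hj)⟩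
  · calc n ≤ #((Ioi i).map a.toEmbedding) := by
          rw [card_map, Fin.card_Ioi]
          simp only [i]
          omega
      _ ≤ _ := card_le_card fun x hx => by
        obtain ⟨j, hj, rfl⟩ := mem_map.1 hx
        exact mem_filter.2 ⟨A.orderEmbOfFin_mem rfl j, a.strictMono (mem_Ioi.1 hj)⟩

theorem exists_separated_subsets {A B : Finset ℕ} {n : ℕ} (hA : 2 * n + 1 ≤ #A)
    (hB : 2 * n + 1 ≤ #B) :
    ∃ A' ⊆ A, ∃ B' ⊆ B, n ≤ #A' ∧ n ≤ #B' ∧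
      ((∀ x ∈ A', ∀ y ∈ B', x + 2 ≤ y) ∨ ∀ x ∈ A', ∀ y ∈ B', y + 2 ≤ x) := by
  obtain ⟨a, hAlt, hAgt⟩ := exists_median hA
  obtain ⟨b, hBlt, hBgt⟩ := exists_median hB
  obtain hab | hba := le_total a b
  · refine ⟨_, filter_subset _ _, _, filter_subset _ _, hAlt, hBgt, .inl fun x hx y hy => ?_⟩
    have := (mem_filter.1 hx).2
    have := (mem_filter.1 hy).2
    omega
  · refine ⟨_, filter_subset _ _, _, filter_subset _ _, hAgt, hBlt, .inr fun x hx y hy => ?_⟩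
    have := (mem_filter.1 hx).2
    have := (mem_filter.1 hy).2
    omega

end SeparatedPositions

section ZeroSum

variable {ι : Type*}

theorem exists_card_eq_and_sum_eq {I : Finset ι} {w : ι → ℤ} {b : ℕ}
    (hw : ∀ i ∈ I, w i ∈ Set.Icc 1 (b : ℤ)) (hI : b * b < #I) :
    ∃ v ∈ Set.Icc 1 b, ∀ n ≤ b, ∃ J ⊆ I, #J = n ∧ ∑ i ∈ J, w i = n * v := by
  obtain ⟨v, hv, hcard⟩ := exists_lt_card_fiber_of_mul_lt_card_of_maps_to
    (s := I) (t := Icc 1 (b : ℤ)) (f := w) (fun i hi => mem_Icc.2 (hw i hi)) (by simpa using hI)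
  rw [mem_Icc] at hv
  lift v to ℕ using by omega
  refine ⟨v, ⟨by omega, by omega⟩, fun n hn => ?_⟩
  obtain ⟨J, hJ, hJn⟩ := exists_subset_card_eq (hn.trans hcard.le)
  refine ⟨J, hJ.trans (filter_subset _ _), hJn, ?_⟩
  rw [sum_congr rfl fun i hi => (mem_filter.1 (hJ hi)).2, sum_const, hJn, nsmul_eq_mul]

theorem exists_nonempty_sum_eq_zero {I : Finset ι} {w : ι → ℤ} {b : ℕ}
    (hw : ∀ i ∈ I, |w i| ≤ b) (hneg : b * b < #{i ∈ I | w i ≤ 0})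
    (hpos : b * b < #{i ∈ I | 0 ≤ w i}) :
    ∃ J ⊆ I, J.Nonempty ∧ ∑ i ∈ J, w i = 0 := by
  classical
  by_cases hzero : ∃ i ∈ I, w i = 0
  · obtain ⟨i, hi, hwi⟩ := hzero
    exact ⟨{i}, by simpa, singleton_nonempty i, by simpa⟩
  push Not at hzero
  -- `q` terms of weight `-p` cancel `p` terms of weight `q`.
  obtain ⟨p, hp, hsum_neg⟩ := exists_card_eq_and_sum_eq (w := fun i => -w i) (fun i hi => by
    obtain ⟨hi, hwi⟩ := mem_filter.1 hi
    have := abs_le.1 (hw i hi)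
    have := hzero i hi
    exact ⟨by omega, by omega⟩) hneg
  obtain ⟨q, hq, hsum_pos⟩ := exists_card_eq_and_sum_eq (w := w) (fun i hi => by
    obtain ⟨hi, hwi⟩ := mem_filter.1 hi
    have := abs_le.1 (hw i hi)
    have := hzero i hi
    exact ⟨by omega, by omega⟩) hpos
  obtain ⟨J, hJ, hJcard, hJsum⟩ := hsum_neg q hq.2
  obtain ⟨L, hL, -, hLsum⟩ := hsum_pos p hp.2
  have hdisj : Disjoint J L := disjoint_left.2 fun i hiJ hiL => by
    have hi := mem_filter.1 (hJ hiJ)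
    exact hzero i hi.1 (le_antisymm hi.2 (mem_filter.1 (hL hiL)).2)
  refine ⟨J ∪ L, union_subset (hJ.trans (filter_subset _ _)) (hL.trans (filter_subset _ _)),
    .inl (card_pos.1 (by rw [hJcard]; exact hq.1)), ?_⟩
  rw [sum_neg_distrib] at hJsum
  rw [sum_union hdisj, hLsum]
  linarith

end ZeroSum

section VertexSequences

variable {V : Type*}

/-- The edge from the `k`-th to the `(k + 1)`-st term of a vertex sequence. -/
def seqEdge (c : ℕ → V) (k : ℕ) : Sym2 V := s(c k, c (k + 1))

theorem injOn_succ_of_closed {c : ℕ → V} {n : ℕ} (hinj : Set.InjOn c (Set.Iio n))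
    (hclosed : c n = c 0) : Set.InjOn (fun k => c (k + 1)) (Set.Iio n) := by
  have succ_eq : ∀ k < n, c (k + 1) = c (if k + 1 < n then k + 1 else 0) := by
    intro k hk
    split_ifs with h
    · rfl
    · rw [show k + 1 = n by omega, hclosed]
  intro i (hi : i < n) j (hj : j < n) hij
  simp only [succ_eq i hi, succ_eq j hj] at hij
  have := hinj (show _ < n by split_ifs <;> omega) (show _ < n by split_ifs <;> omega) hij
  split_ifs at this <;> omega

theorem seqEdge_injOn {c : ℕ → V} {n : ℕ} (hn : 3 ≤ n) (hinj : Set.InjOn c (Set.Iio n))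
    (hclosed : c n = c 0) : Set.InjOn (seqEdge c) (Set.Iio n) := by
  have succ_of_eq : ∀ i < n, ∀ j < n, c i = c (j + 1) → i = j + 1 ∨ (j + 1 = n ∧ i = 0) := by
    intro i hi j hj h
    rcases Nat.lt_or_ge (j + 1) n with hj' | hj'
    · exact .inl (hinj hi hj' h)
    · have hjn : j + 1 = n := by omega
      exact .inr ⟨hjn, hinj hi (show 0 < n by omega) (by rw [h, hjn, hclosed])⟩
  intro i (hi : i < n) j (hj : j < n) hij
  rcases Sym2.eq_iff.1 hij with ⟨h, -⟩ | ⟨h₁, h₂⟩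
  · exact hinj hi hj h
  · have := succ_of_eq i hi j hj h₁
    have := succ_of_eq j hj i hi h₂.symm
    omega

theorem exists_walk_of_adj_succ {G : SimpleGraph V} {c : ℕ → V} :
    ∀ n : ℕ, (∀ k < n, G.Adj (c k) (c (k + 1))) →
      ∃ p : G.Walk (c 0) (c n), p.support = (List.range (n + 1)).map c ∧
        p.edges = (List.range n).map (seqEdge c)
  | 0, _ => ⟨.nil, by simp, by simp⟩
  | n + 1, hadj => by
    obtain ⟨p, hsupport, hedges⟩ := exists_walk_of_adj_succ n fun k hk => hadj k (by omega)
    refine ⟨p.concat (hadj n n.lt_succ_self), ?_, ?_⟩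
    · simp [SimpleGraph.Walk.support_concat, hsupport, List.range_succ (n := n + 1)]
    · simp [SimpleGraph.Walk.edges_concat, hedges, List.range_succ (n := n), seqEdge]

theorem walk_edges_eq_map_range {G : SimpleGraph V} {u v : V} (p : G.Walk u v) :
    p.edges = (List.range p.length).map (seqEdge p.getVert) := by
  refine List.ext_getElem (by simp) fun k _ _ => ?_
  rw [SimpleGraph.Walk.getElem_edges_eq_edge_getElem_darts,
    SimpleGraph.Walk.darts_getElem_eq_getVert]
  simp [seqEdge]

variable [DecidableEq V]

/-- The edges with index in `[i, j)` of a vertex sequence: the path along a traced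
cycle from its `i`-th to its `j`-th vertex. -/
def seqArc (c : ℕ → V) (i j : ℕ) : Finset (Sym2 V) := (Ico i j).image (seqEdge c)

theorem altList_map_range {M : Finset (Sym2 V)} {f : ℕ → Sym2 V} {n : ℕ} :
    altList M ((List.range n).map f) ↔ ∀ k, k + 1 < n → ¬(f k ∈ M ↔ f (k + 1) ∈ M) := by
  refine List.isChain_iff_getElem.trans ?_
  simp

theorem altList_map_range_cyclic {M : Finset (Sym2 V)} {f : ℕ → Sym2 V} {n : ℕ} (hn : 0 < n) :
    altList M ((List.range n).map f ++ ((List.range n).map f).take 1) ↔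
      ∀ k < n, ¬(f k ∈ M ↔ f ((k + 1) % n) ∈ M) := by
  have hlist : (List.range n).map f ++ ((List.range n).map f).take 1 =
      (List.range (n + 1)).map fun k => f (k % n) := by
    obtain ⟨m, rfl⟩ := Nat.exists_eq_succ_of_ne_zero hn.ne'
    rw [List.range_succ (n := m + 1), List.map_append]
    congr 1
    · exact List.map_congr_left fun k hk => by rw [Nat.mod_eq_of_lt (List.mem_range.1 hk)]
    · simp [List.range_succ_eq_map]
  rw [hlist, altList_map_range]
  simp only [Nat.add_lt_add_iff_right]
  exact forall₂_congr fun k hk => by rw [Nat.mod_eq_of_lt hk]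

end VertexSequences

theorem even_and_iff_even_of_alternating {P : ℕ → Prop} {n : ℕ} (hn : 0 < n)
    (hP : ∀ k < n, ¬(P k ↔ P ((k + 1) % n))) :
    Even n ∧ ∀ k < n, (P k ↔ (P 0 ↔ Even k)) := by
  have parity : ∀ k < n, (P k ↔ (P 0 ↔ Even k)) := by
    intro k
    induction k with
    | zero => simp
    | succ k ih =>
      intro hk
      have hne := hP k (by omega)
      rw [Nat.mod_eq_of_lt hk] at hne
      have := ih (by omega)
      rw [Nat.even_add_one]
      tauto
  refine ⟨?_, parity⟩
  have hlast := hP (n - 1) (by omega)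
  rw [Nat.sub_add_cancel hn, Nat.mod_self, parity (n - 1) (by omega)] at hlast
  have : ¬Even (n - 1) := by tauto
  grind

theorem alternating_of_iff_even {P : ℕ → Prop} {n : ℕ} (hn : Even n)
    (hP : ∀ k < n, (P k ↔ Even k)) : ∀ k < n, ¬(P k ↔ P ((k + 1) % n)) := by
  intro k hk
  have hmod : Even ((k + 1) % n) ↔ Even (k + 1) := by
    rw [Nat.even_iff, Nat.even_iff, Nat.mod_mod_of_dvd _ hn.two_dvd]
  rw [hP k hk, hP _ (Nat.mod_lt _ (by omega)), hmod, Nat.even_add_one]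
  tauto

/-- `c` traces the `M`-alternating cycle with edge set `C` and `2 * K` edges: `c 0, …, c (2K - 1)`
are its vertices in cyclic order, `c (2K) = c 0`, and the first edge lies in `M`. -/
structure AltTrace {V : Type*} [DecidableEq V] (G : SimpleGraph V) (M C : Finset (Sym2 V))
    (K : ℕ) (c : ℕ → V) : Prop where
  two_le : 2 ≤ K
  injOn : Set.InjOn c (Set.Iio (2 * K))
  closed : c (2 * K) = c 0
  adj : ∀ k < 2 * K, G.Adj (c k) (c (k + 1))
  mem_iff : ∀ k < 2 * K, seqEdge c k ∈ M ↔ Even k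
  eq_image : C = (range (2 * K)).image (seqEdge c)

section AlternatingCycles

variable {V : Type*} [DecidableEq V] {G : SimpleGraph V} {M C : Finset (Sym2 V)}

namespace AltTrace

variable {K : ℕ} {c : ℕ → V}

theorem seqEdge_injOn (h : AltTrace G M C K c) :
    Set.InjOn (seqEdge c) (range (2 * K) : Finset ℕ) := by
  have := h.two_le
  rw [coe_range]
  exact _root_.seqEdge_injOn (by omega) h.injOn h.closed

theorem card_eq (h : AltTrace G M C K c) : #C = 2 * K := by
  rw [h.eq_image, card_image_of_injOn h.seqEdge_injOn, card_range]

theorem seqEdge_mem (h : AltTrace G M C K c) {k : ℕ} (hk : k < 2 * K) : seqEdge c k ∈ C :=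
  h.eq_image ▸ mem_image_of_mem _ (mem_range.2 hk)

theorem isAltCycle (h : AltTrace G M C K c) : IsAltCycle G M C := by
  obtain ⟨p, hsupport, hedges⟩ := exists_walk_of_adj_succ (2 * K) h.adj
  have hK := h.two_le
  refine ⟨c 0, p.copy rfl h.closed, ?_, ?_, ?_⟩
  · rw [SimpleGraph.Walk.isCycle_def, SimpleGraph.Walk.isTrail_def,
      SimpleGraph.Walk.support_copy, SimpleGraph.Walk.edges_copy, hsupport, hedges]
    refine ⟨?_, ?_, ?_⟩
    · exact List.nodup_range.map_on fun i hi j hj =>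
        h.seqEdge_injOn (by simpa using hi) (by simpa using hj)
    · intro hnil
      have := congrArg (fun q => q.edges.length) hnil
      simp only [SimpleGraph.Walk.edges_copy, hedges, List.length_map, List.length_range,
        SimpleGraph.Walk.edges_nil, List.length_nil] at this
      omega
    · rw [List.range_succ_eq_map, List.map_cons, List.tail_cons, List.map_map]
      exact List.nodup_range.map_on fun i hi j hj =>
        injOn_succ_of_closed h.injOn h.closed (List.mem_range.1 hi) (List.mem_range.1 hj)
  · rw [SimpleGraph.Walk.edges_copy, hedges, h.eq_image]
    ext e
    simp
  · rw [SimpleGraph.Walk.edges_copy, hedges, altList_map_range_cyclic (by omega)]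
    exact alternating_of_iff_even (even_two_mul K) h.mem_iff

theorem isAltPath_seqArc (h : AltTrace G M C K c) {i j : ℕ} (hij : i ≤ j) (hj : j < 2 * K) :
    IsAltPath G M (seqArc c i j) := by
  obtain ⟨p, hsupport, hedges⟩ := exists_walk_of_adj_succ (c := fun k => c (i + k)) (j - i)
    fun k hk => h.adj (i + k) (by omega)
  refine ⟨_, _, p, ?_, ?_, ?_⟩
  · rw [SimpleGraph.Walk.isPath_def, hsupport]
    refine List.nodup_range.map_on fun k hk l hl hkl => ?_
    rw [List.mem_range] at hk hl
    have := h.injOn (show i + k < 2 * K by omega) (show i + l < 2 * K by omega) hkl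
    omega
  · have hIco : Ico i j = (range (j - i)).image (i + ·) := by
      rw [range_eq_Ico, image_add_left_Ico, add_zero, Nat.add_sub_cancel' hij]
    rw [hedges, seqArc, hIco, image_image]
    ext e
    simp [seqEdge, add_assoc]
  · rw [hedges, altList_map_range]
    intro k hk
    rw [show seqEdge (fun k => c (i + k)) k = seqEdge c (i + k) from rfl,
      show seqEdge (fun k => c (i + k)) (k + 1) = seqEdge c (i + k + 1) from rfl,
      h.mem_iff _ (by omega), h.mem_iff _ (by omega), Nat.even_add_one]
    tauto

theorem seqArc_subset (h : AltTrace G M C K c) {i j : ℕ} (hj : j ≤ 2 * K) : seqArc c i j ⊆ C := by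
  rw [h.eq_image]
  exact image_subset_image fun k hk => mem_range.2 ((mem_Ico.1 hk).2.trans_le hj)

theorem disjoint_seqArc (h : AltTrace G M C K c) {i j i' j' : ℕ} (hji : j ≤ i')
    (hj : j' ≤ 2 * K) : Disjoint (seqArc c i j) (seqArc c i' j') := by
  simp only [disjoint_left, seqArc, mem_image, mem_Ico]
  rintro _ ⟨k, hk, rfl⟩ ⟨l, hl, hkl⟩
  have := h.seqEdge_injOn (mem_coe.2 (mem_range.2 (by omega)))
    (mem_coe.2 (mem_range.2 (by omega))) hkl
  omega

end AltTrace

theorem altTrace_getVert {v : V} {p : G.Walk v v} (hp : p.IsCycle) {K : ℕ}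
    (hlen : p.length = 2 * K) (hM : ∀ k < 2 * K, seqEdge p.getVert k ∈ M ↔ Even k) :
    AltTrace G M p.edges.toFinset K p.getVert where
  two_le := by have := hp.three_le_length; omega
  injOn := hp.getVert_injOn'.mono fun k (hk : k < 2 * K) => by
    have := hp.three_le_length
    exact show k ≤ p.length - 1 by omega
  closed := by rw [← hlen, p.getVert_length, p.getVert_zero]
  adj k hk := p.adj_getVert_succ (hlen ▸ hk)
  mem_iff := hM
  eq_image := by
    rw [walk_edges_eq_map_range, hlen]
    ext e
    simp

theorem IsAltCycle.exists_altTrace (h : IsAltCycle G M C) : ∃ K c, AltTrace G M C K c := by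
  obtain ⟨v, p, hp, rfl, halt⟩ := h
  have hpos : 0 < p.length := by have := hp.three_le_length; omega
  rw [walk_edges_eq_map_range, altList_map_range_cyclic hpos] at halt
  obtain ⟨⟨K, hK⟩, hmem⟩ := even_and_iff_even_of_alternating
    (P := fun k => seqEdge p.getVert k ∈ M) hpos halt
  replace hK : p.length = 2 * K := by omega
  by_cases h0 : seqEdge p.getVert 0 ∈ M
  · exact ⟨K, _, altTrace_getVert hp hK fun k hk => by simpa [h0] using hmem k (hK ▸ hk)⟩
  have hreverse : ∀ k < 2 * K, seqEdge p.reverse.getVert k = seqEdge p.getVert (2 * K - 1 - k) := by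
    intro k hk
    rw [seqEdge, seqEdge, p.getVert_reverse, p.getVert_reverse, Sym2.eq_swap, hK,
      show 2 * K - (k + 1) = 2 * K - 1 - k by omega, show 2 * K - k = 2 * K - 1 - k + 1 by omega]
  rw [← List.toFinset_reverse, ← SimpleGraph.Walk.edges_reverse]
  refine ⟨K, _, altTrace_getVert hp.reverse (by simpa) fun k hk => ?_⟩
  rw [hreverse k hk, hmem _ (by omega)]
  grind

end AlternatingCycles

section Weights

variable {V : Type*} [DecidableEq V]

/-- The edge set `M` is a matching: no two of its edges share a vertex. -/
def IsMatching (M : Finset (Sym2 V)) : Prop :=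
  ∀ e ∈ M, ∀ f ∈ M, ∀ v ∈ e, v ∈ f → e = f

theorem IsPM.isMatching {G : SimpleGraph V} {M : Finset (Sym2 V)} (hM : IsPM G M) : IsMatching M :=
  fun _ he _ hf v hve hvf => (hM.2 v).unique ⟨he, hve⟩ ⟨hf, hvf⟩

variable {red : Sym2 V → Bool} {M : Finset (Sym2 V)} {e : Sym2 V}

theorem wt_mem_Icc_of_mem (he : e ∈ M) : wt red M e ∈ Set.Icc (-1) 0 := by
  unfold wt
  split_ifs <;> simp

theorem wt_mem_Icc_of_notMem (he : e ∉ M) : wt red M e ∈ Set.Icc 0 1 := by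
  unfold wt
  split_ifs <;> simp

end Weights

section Rerouting

/-- The edge positions `2x + 1, 2x + 2, 2x + 3` of a traced cycle. These are the `x`-th
non-matching–matching–non-matching stretch, which a skip may cut out. -/
def stretch (x : ℕ) : Finset ℕ := Ico (2 * x + 1) (2 * x + 4)

/-- The position in the original vertex sequence of the `k`-th vertex after the stretches `x` and
`y` have been cut out and the part between them has been reversed. -/
def rerouteIndex (x y k : ℕ) : ℕ :=
  if k ≤ 2 * x + 1 then k else if k < 2 * y then 2 * x + 2 * y + 3 - k else k + 4

/-- The vertex sequence that jumps from `c (2x + 1)` to `c (2y + 1)`, runs backwards to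
`c (2x + 4)`, jumps to `c (2y + 4)` and continues as `c`. -/
def reroute {V : Type*} (c : ℕ → V) (x y : ℕ) : ℕ → V := c ∘ rerouteIndex x y

variable {V : Type*} {K x y : ℕ} {c : ℕ → V}

theorem seqEdge_reroute_cases (hxy : x + 2 ≤ y) (hy : y + 2 ≤ K) {k : ℕ} (hk : k < 2 * (K - 2)) :
    (k = 2 * x + 1 ∧ seqEdge (reroute c x y) k = s(c (2 * x + 1), c (2 * y + 1))) ∨
    (k + 1 = 2 * y ∧ seqEdge (reroute c x y) k = s(c (2 * x + 4), c (2 * y + 4))) ∨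
    ∃ j ∈ range (2 * K) \ (stretch x ∪ stretch y), (Even j ↔ Even k) ∧
      seqEdge (reroute c x y) k = seqEdge c j := by
  have low : ∀ k ≤ 2 * x + 1, reroute c x y k = c k := fun k hk => by
    simp [reroute, rerouteIndex, hk]
  have mid : ∀ k, 2 * x + 1 < k → k < 2 * y → reroute c x y k = c (2 * x + 2 * y + 3 - k) :=
    fun k hk hk' => by simp [reroute, rerouteIndex, hk.not_ge, hk']
  have high : ∀ k, 2 * y ≤ k → reroute c x y k = c (k + 4) := fun k hk => by
    simp [reroute, rerouteIndex, hk.not_gt, show ¬k ≤ 2 * x + 1 by omega]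
  simp only [mem_sdiff, mem_union, stretch, mem_Ico, mem_range, seqEdge]
  obtain hk | rfl | hk | hk | hk : k ≤ 2 * x ∨ k = 2 * x + 1 ∨ (2 * x + 1 < k ∧ k + 1 < 2 * y) ∨
    k + 1 = 2 * y ∨ 2 * y ≤ k := by omega
  · refine .inr (.inr ⟨k, by omega, .rfl, ?_⟩)
    rw [low k (by omega), low (k + 1) (by omega)]
  · refine .inl ⟨rfl, ?_⟩
    rw [low _ le_rfl, mid _ (by omega) (by omega)]
    congr 3
    omega
  · refine .inr (.inr ⟨2 * x + 2 * y + 2 - k, by omega, by grind, ?_⟩)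
    rw [mid k hk.1 (by omega), mid (k + 1) (by omega) hk.2, Sym2.eq_swap,
      show 2 * x + 2 * y + 3 - (k + 1) = 2 * x + 2 * y + 2 - k by omega,
      show 2 * x + 2 * y + 3 - k = 2 * x + 2 * y + 2 - k + 1 by omega]
  · refine .inr (.inl ⟨hk, ?_⟩)
    rw [mid k (by omega) (by omega), high (k + 1) (by omega),
      show 2 * x + 2 * y + 3 - k = 2 * x + 4 by omega, show k + 1 + 4 = 2 * y + 4 by omega]
  · refine .inr (.inr ⟨k + 4, by omega, by grind, ?_⟩)
    rw [high k hk, high (k + 1) (by omega), add_right_comm]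

theorem disjoint_stretch (hxy : x + 2 ≤ y) : Disjoint (stretch x) (stretch y) := by
  simp only [disjoint_left, stretch, mem_Ico]
  omega

theorem stretch_subset_range (hx : x + 2 ≤ K) : stretch x ⊆ range (2 * K) := fun k => by
  simp only [stretch, mem_Ico, mem_range]
  omega

theorem card_range_sdiff_stretches (hxy : x + 2 ≤ y) (hy : y + 2 ≤ K) :
    #(range (2 * K) \ (stretch x ∪ stretch y)) = 2 * K - 6 := by
  have hsub : stretch x ∪ stretch y ⊆ range (2 * K) :=
    union_subset (stretch_subset_range (by omega)) (stretch_subset_range hy)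
  rw [card_sdiff_of_subset hsub, card_union_of_disjoint (disjoint_stretch hxy), card_range,
    stretch, stretch, Nat.card_Ico, Nat.card_Ico]
  omega

end Rerouting

section Skips

variable {V : Type*} [DecidableEq V] {G : SimpleGraph V} {red : Sym2 V → Bool}
  {M C : Finset (Sym2 V)} {K : ℕ} {c : ℕ → V}

/-- The total weight of the stretch `x` of the cycle traced by `c`. -/
def stretchWeight (red : Sym2 V → Bool) (M : Finset (Sym2 V)) (c : ℕ → V) (x : ℕ) : ℤ :=
  ∑ k ∈ stretch x, wt red M (seqEdge c k)

namespace AltTrace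

theorem stretchWeight_mem_Icc (h : AltTrace G M C K c) {x : ℕ} (hx : x + 2 ≤ K) :
    stretchWeight red M c x ∈ Set.Icc (-1) 2 := by
  have odd_mem : ∀ k < 2 * K, ¬Even k → wt red M (seqEdge c k) ∈ Set.Icc 0 1 := fun k hk hodd =>
    wt_mem_Icc_of_notMem (mt (h.mem_iff k hk).1 hodd)
  have h₁ := odd_mem (2 * x + 1) (by omega) (by grind)
  have h₂ : wt red M (seqEdge c (2 * x + 2)) ∈ _ :=
    wt_mem_Icc_of_mem ((h.mem_iff _ (by omega)).2 (by grind))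
  have h₃ := odd_mem (2 * x + 3) (by omega) (by grind)
  simp only [Set.mem_Icc] at *
  have hIco : stretch x = {2 * x + 1, 2 * x + 2, 2 * x + 3} := by
    ext k
    simp only [stretch, mem_Ico, mem_insert, mem_singleton]
    omega
  rw [stretchWeight, hIco, sum_insert (by simp), sum_pair (by simp)]
  omega

theorem reroute_image (h : AltTrace G M C K c) {x y : ℕ} (hxy : x + 2 ≤ y) (hy : y + 2 < K)
    (h₁ : G.Adj (c (2 * x + 1)) (c (2 * y + 1))) (h₂ : G.Adj (c (2 * x + 4)) (c (2 * y + 4)))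
    (hM₁ : s(c (2 * x + 1), c (2 * y + 1)) ∉ M) (hM₂ : s(c (2 * x + 4), c (2 * y + 4)) ∉ M) :
    AltTrace G M ((range (2 * (K - 2))).image (seqEdge (reroute c x y))) (K - 2)
      (reroute c x y) where
  two_le := by omega
  injOn i (hi : i < _) j (hj : j < _) hij := by
    simp only [reroute, Function.comp, rerouteIndex] at hij
    have := h.injOn (show _ < 2 * K by split_ifs <;> omega)
      (show _ < 2 * K by split_ifs <;> omega) hij
    split_ifs at this <;> omega
  closed := by
    simp only [reroute, Function.comp, rerouteIndex]
    rw [if_neg (by omega), if_neg (by omega), if_pos (by omega), ← h.closed]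
    congr 1
    omega
  adj k hk := by
    rw [← SimpleGraph.mem_edgeSet]
    change seqEdge (reroute c x y) k ∈ _
    obtain ⟨-, hk⟩ | ⟨-, hk⟩ | ⟨j, hj, -, hk⟩ := seqEdge_reroute_cases (c := c) hxy hy.le hk
    · exact hk ▸ h₁
    · exact hk ▸ h₂
    · exact hk ▸ h.adj j (mem_range.1 (mem_sdiff.1 hj).1)
  mem_iff k hk := by
    obtain ⟨rfl, hk⟩ | ⟨hky, hk⟩ | ⟨j, hj, hparity, hk⟩ :=
      seqEdge_reroute_cases (c := c) hxy hy.le hk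
    · rw [hk]
      grind
    · rw [hk]
      grind
    · rw [hk, h.mem_iff j (mem_range.1 (mem_sdiff.1 hj).1), hparity]
  eq_image := rfl

theorem eq_insert_of_reroute {x y : ℕ} (h : AltTrace G M C (K - 2) (reroute c x y))
    (hxy : x + 2 ≤ y) (hy : y + 2 ≤ K) :
    C = insert s(c (2 * x + 1), c (2 * y + 1)) (insert s(c (2 * x + 4), c (2 * y + 4))
      ((range (2 * K) \ (stretch x ∪ stretch y)).image (seqEdge c))) := by
  refine eq_of_subset_of_card_le (fun e he => ?_) ?_
  · rw [h.eq_image] at he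
    obtain ⟨k, hk, rfl⟩ := mem_image.1 he
    obtain ⟨-, hk⟩ | ⟨-, hk⟩ | ⟨j, hj, -, hk⟩ :=
      seqEdge_reroute_cases (c := c) hxy hy (mem_range.1 hk)
    · simp [hk]
    · simp [hk]
    · exact mem_insert_of_mem (mem_insert_of_mem (hk ▸ mem_image_of_mem _ hj))
  · have hkept := card_image_le (s := range (2 * K) \ (stretch x ∪ stretch y)) (f := seqEdge c)
    rw [card_range_sdiff_stretches hxy hy] at hkept
    rw [h.card_eq]
    refine (card_insert_le _ _).trans ((Nat.succ_le_succ (card_insert_le _ _)).trans ?_)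
    omega

theorem chord_notMem (h : AltTrace G M C K c) {i j : ℕ} (hij : i + 1 < j) (hj : j + 1 < 2 * K) :
    s(c i, c j) ∉ C := by
  rw [h.eq_image]
  simp only [mem_image, mem_range, seqEdge, Sym2.eq_iff]
  rintro ⟨k, hk, ⟨hi, hj'⟩ | ⟨hi, hj'⟩⟩
  · obtain rfl := h.injOn hk (show i < 2 * K by omega) hi
    have := h.injOn (show k + 1 < 2 * K by omega) (show j < 2 * K by omega) hj'
    omega
  · obtain rfl := h.injOn hk (show j < 2 * K by omega) hi
    have := h.injOn (show k + 1 < 2 * K by omega) (show i < 2 * K by omega) hj'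
    omega

theorem mem_of_mem_matching (h : AltTrace G M C K c) (hM : IsMatching M) {e : Sym2 V} (he : e ∈ M)
    {i : ℕ} (hi : i < 2 * K) (hie : c i ∈ e) : e ∈ C := by
  have hiM : c i ∈ seqEdge c (2 * (i / 2)) := by
    obtain hi | hi : i = 2 * (i / 2) ∨ i = 2 * (i / 2) + 1 := by omega
    · exact Sym2.mem_iff.2 (.inl (congrArg c hi))
    · exact Sym2.mem_iff.2 (.inr (congrArg c hi))
  rw [hM e he _ ((h.mem_iff _ (by omega)).2 (even_two_mul _)) _ hie hiM]
  exact h.seqEdge_mem (by omega)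

theorem wSum_image_sdiff_stretches (h : AltTrace G M C K c) {x y : ℕ} (hxy : x + 2 ≤ y)
    (hy : y + 2 ≤ K) :
    wSum red M ((range (2 * K) \ (stretch x ∪ stretch y)).image (seqEdge c)) =
      wSum red M C - stretchWeight red M c x - stretchWeight red M c y := by
  have hsub : stretch x ∪ stretch y ⊆ range (2 * K) :=
    union_subset (stretch_subset_range (by omega)) (stretch_subset_range hy)
  rw [h.eq_image, wSum, wSum, sum_image h.seqEdge_injOn,
    sum_image (h.seqEdge_injOn.mono (coe_subset.2 sdiff_subset)), ← sum_sdiff hsub,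
    sum_union (disjoint_stretch hxy), stretchWeight, stretchWeight]
  ring

theorem chord_ne_chord (h : AltTrace G M C K c) {x y : ℕ} (hxy : x + 2 ≤ y) (hy : y + 2 < K) :
    s(c (2 * x + 1), c (2 * y + 1)) ≠ s(c (2 * x + 4), c (2 * y + 4)) := by
  rw [Ne, Sym2.eq_iff]
  rintro (⟨hc, -⟩ | ⟨hc, -⟩) <;>
  · have := h.injOn (show 2 * x + 1 < 2 * K by omega) (show _ < 2 * K by omega) hc
    omega

theorem wSum_of_reroute (h : AltTrace G M C K c) {x y : ℕ} (hxy : x + 2 ≤ y) (hy : y + 2 < K)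
    {C' : Finset (Sym2 V)} (h' : AltTrace G M C' (K - 2) (reroute c x y)) :
    wSum red M C' = wt red M s(c (2 * x + 1), c (2 * y + 1)) +
      wt red M s(c (2 * x + 4), c (2 * y + 4)) +
        (wSum red M C - stretchWeight red M c x - stretchWeight red M c y) := by
  have chord_notMem_kept : ∀ i j, i + 1 < j → j + 1 < 2 * K → s(c i, c j) ∉
      (range (2 * K) \ (stretch x ∪ stretch y)).image (seqEdge c) := fun i j hij hj hmem =>
    h.chord_notMem hij hj (h.eq_image ▸ image_subset_image sdiff_subset hmem)
  rw [h'.eq_insert_of_reroute hxy hy.le, wSum, sum_insert, sum_insert,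
    ← h.wSum_image_sdiff_stretches hxy hy.le, wSum, add_assoc]
  · exact chord_notMem_kept _ _ (by omega) (by omega)
  · rw [mem_insert, not_or]
    exact ⟨h.chord_ne_chord hxy hy, chord_notMem_kept _ _ (by omega) (by omega)⟩

theorem sdiff_chords_subset (h : AltTrace G M C K c) {x y : ℕ} (hxy : x + 2 ≤ y) (hy : y + 2 ≤ K)
    {C' : Finset (Sym2 V)} (h' : AltTrace G M C' (K - 2) (reroute c x y)) :
    C' \ {s(c (2 * x + 1), c (2 * y + 1)), s(c (2 * x + 4), c (2 * y + 4))} ⊆ C := by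
  intro e he
  simp only [h'.eq_insert_of_reroute hxy hy, mem_sdiff, mem_insert, mem_singleton] at he
  have hkept : e ∈ (range (2 * K) \ (stretch x ∪ stretch y)).image (seqEdge c) := by tauto
  exact h.eq_image ▸ image_subset_image sdiff_subset hkept

theorem sdiff_subset_seqArc (h : AltTrace G M C K c) {x y : ℕ} (hxy : x + 2 ≤ y) (hy : y + 2 ≤ K)
    {C' : Finset (Sym2 V)} (h' : AltTrace G M C' (K - 2) (reroute c x y)) :
    C \ C' ⊆ seqArc c (2 * x + 1) (2 * y + 4) := by
  intro e he
  simp only [h.eq_image, h'.eq_insert_of_reroute hxy hy, mem_sdiff, mem_insert, not_or] at he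
  obtain ⟨⟨k, hk, rfl⟩, -, -, he⟩ := mem_image.1 he.1, he.2
  have hk' : k ∈ stretch x ∪ stretch y := by
    by_contra hk'
    exact he (mem_image_of_mem _ (mem_sdiff.2 ⟨hk, hk'⟩))
  refine mem_image_of_mem _ (mem_Ico.2 ?_)
  simp only [mem_union, stretch, mem_Ico] at hk'
  omega

theorem exists_skip (h : AltTrace G M C K c) (hM : IsMatching M) {x y : ℕ} (hxy : x + 2 ≤ y)
    (hy : y + 2 < K) (h₁ : G.Adj (c (2 * x + 1)) (c (2 * y + 1)))
    (h₂ : G.Adj (c (2 * x + 4)) (c (2 * y + 4))) :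
    ∃ S : Skip G red M C, S.In (seqArc c (2 * x + 1) (2 * y + 4)) ∧
      S.w + stretchWeight red M c x + stretchWeight red M c y ∈ Set.Icc 0 2 := by
  have hC₁ := h.chord_notMem (i := 2 * x + 1) (j := 2 * y + 1) (by omega) (by omega)
  have hC₂ := h.chord_notMem (i := 2 * x + 4) (j := 2 * y + 4) (by omega) (by omega)
  have hM₁ := fun hmem => hC₁ (h.mem_of_mem_matching hM hmem (by omega) (Sym2.mem_mk_left _ _))
  have hM₂ := fun hmem => hC₂ (h.mem_of_mem_matching hM hmem (by omega) (Sym2.mem_mk_left _ _))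
  have h' := h.reroute_image hxy hy h₁ h₂ hM₁ hM₂
  generalize (range (2 * (K - 2))).image (seqEdge (reroute c x y)) = C' at h'
  have hC' := h'.eq_insert_of_reroute hxy hy.le
  have hw := h.wSum_of_reroute (red := red) hxy hy h'
  have hw₁ := wt_mem_Icc_of_notMem (red := red) hM₁
  have hw₂ := wt_mem_Icc_of_notMem (red := red) hM₂
  have hwx := h.stretchWeight_mem_Icc (red := red) (show x + 2 ≤ K by omega)
  have hwy := h.stretchWeight_mem_Icc (red := red) hy.le
  simp only [Set.mem_Icc] at hw₁ hw₂ hwx hwy ⊢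
  have hcard : #C' < #C := by
    rw [h'.card_eq, h.card_eq]
    omega
  exact ⟨⟨_, _, C', h.chord_ne_chord hxy hy, h₁, h₂, hM₁, hM₂, hC₁, hC₂, h'.isAltCycle,
    by simp [hC'], by simp [hC'], h.sdiff_chords_subset hxy hy.le h', hcard,
    by rw [abs_le]; omega⟩, h.sdiff_subset_seqArc hxy hy.le h', by simp only [Skip.w]; omega⟩

end AltTrace

end Skips

section Counting

theorem sum_sum_stretch (f : ℕ → ℤ) (k : ℕ) :
    ∑ x ∈ range k, ∑ i ∈ stretch x, f i + (f 0 + f 1 + f (2 * k + 1) + f (2 * k + 2) +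
      2 * f (2 * k + 3)) = ∑ i ∈ range (2 * (k + 2)), (if Even i then 1 else 2) * f i := by
  induction k with
  | zero =>
    simp only [sum_range_succ, range_zero, sum_empty, Nat.even_add_one, Even.zero, not_true,
      not_false_iff, if_true, if_false]
    ring
  | succ k ih =>
    have hstretch : ∑ i ∈ stretch k, f i = f (2 * k + 1) + f (2 * k + 2) + f (2 * k + 3) := by
      simp [stretch, sum_Ico_succ_top, add_assoc]
    rw [sum_range_succ, hstretch, show 2 * (k + 1 + 2) = 2 * (k + 2) + 1 + 1 by ring,
      sum_range_succ _ (2 * (k + 2) + 1), sum_range_succ _ (2 * (k + 2)), ← ih,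
      if_pos (even_two_mul _), if_neg (by grind)]
    ring_nf

theorem sum_le_mul_card_filter_one_le {ι : Type*} {s : Finset ι} {f : ι → ℤ} {b : ℤ}
    (hf : ∀ i ∈ s, f i ≤ b) : ∑ i ∈ s, f i ≤ b * #{i ∈ s | 1 ≤ f i} := by
  rw [← sum_filter_add_sum_filter_not s (fun i => 1 ≤ f i)]
  have hlarge := sum_le_card_nsmul {i ∈ s | 1 ≤ f i} f b fun i hi => hf i (mem_filter.1 hi).1
  have hsmall : ∑ i ∈ s with ¬1 ≤ f i, f i ≤ 0 := sum_nonpos fun i hi => by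
    have := (mem_filter.1 hi).2
    omega
  rw [nsmul_eq_mul, mul_comm] at hlarge
  exact (add_le_add hlarge hsmall).trans_eq (add_zero _)

variable {V : Type*} [DecidableEq V] {G : SimpleGraph V} {red : Sym2 V → Bool}
  {M C : Finset (Sym2 V)} {K : ℕ} {c : ℕ → V}

theorem redCount_add_blueCount (red : Sym2 V → Bool) (F : Finset (Sym2 V)) :
    redCount red F + blueCount red F = #F := by
  simpa [redCount, blueCount] using card_filter_add_card_filter_not (s := F) (fun e => red e = true)

theorem redCount_add_three_mul_wSum (red : Sym2 V → Bool) (M F : Finset (Sym2 V)) :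
    (redCount red F : ℤ) + 3 * wSum red M F =
      2 * ∑ e ∈ F, (if e ∈ M then 1 else 2) * wt red M e := by
  rw [redCount, wSum, card_filter, Nat.cast_sum, mul_sum, mul_sum, ← sum_add_distrib]
  refine sum_congr rfl fun e _ => ?_
  unfold wt
  split_ifs <;> norm_num

namespace AltTrace

theorem redCount_add_three_mul_wSum_sub_mem_Icc (h : AltTrace G M C K c) :
    (redCount red C : ℤ) + 3 * wSum red M C - 2 * ∑ x ∈ range (K - 2), stretchWeight red M c x ∈
      Set.Icc (-4) 8 := by
  obtain ⟨k, rfl⟩ := Nat.exists_eq_add_of_le' h.two_le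
  have hC : ∑ e ∈ C, (if e ∈ M then 1 else 2) * wt red M e =
      ∑ i ∈ range (2 * (k + 2)), (if Even i then 1 else 2) * wt red M (seqEdge c i) := by
    rw [h.eq_image, sum_image h.seqEdge_injOn]
    exact sum_congr rfl fun i hi => by simp only [h.mem_iff i (mem_range.1 hi)]
  have even_wt : ∀ i < 2 * (k + 2), Even i → wt red M (seqEdge c i) ∈ Set.Icc (-1) 0 :=
    fun i hi hi' => wt_mem_Icc_of_mem ((h.mem_iff i hi).2 hi')
  have odd_wt : ∀ i < 2 * (k + 2), ¬Even i → wt red M (seqEdge c i) ∈ Set.Icc 0 1 :=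
    fun i hi hi' => wt_mem_Icc_of_notMem (mt (h.mem_iff i hi).1 hi')
  have h₀ := even_wt 0 (by omega) (by grind)
  have h₁ := odd_wt 1 (by omega) (by grind)
  have h₂ := odd_wt (2 * k + 1) (by omega) (by grind)
  have h₃ := even_wt (2 * k + 2) (by omega) (by grind)
  have h₄ := odd_wt (2 * k + 3) (by omega) (by grind)
  have hsum := sum_sum_stretch (fun i => wt red M (seqEdge c i)) k
  rw [redCount_add_three_mul_wSum, hC, ← hsum, Nat.add_sub_cancel]
  simp only [Set.mem_Icc, stretchWeight] at *
  constructor <;> linarith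

theorem redCount_le_card_filter_one_le (h : AltTrace G M C K c) :
    (redCount red C : ℤ) + 3 * wSum red M C - 8 ≤
      4 * #{x ∈ range (K - 2) | 1 ≤ stretchWeight red M c x} := by
  have hsum := sum_le_mul_card_filter_one_le (s := range (K - 2)) (f := stretchWeight red M c)
    (b := 2) fun x hx => (h.stretchWeight_mem_Icc (by have := mem_range.1 hx; omega)).2
  have := (h.redCount_add_three_mul_wSum_sub_mem_Icc (red := red)).2
  linarith

theorem blueCount_le_card_filter_nonpos (h : AltTrace G M C K c) :
    (blueCount red C : ℤ) - 3 * wSum red M C - 8 ≤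
      4 * #{x ∈ range (K - 2) | stretchWeight red M c x ≤ 0} := by
  have hsum := sum_le_mul_card_filter_one_le (s := range (K - 2))
    (f := fun x => 1 - stretchWeight red M c x) (b := 2) fun x hx => by
      have := (h.stretchWeight_mem_Icc (red := red) (x := x) (by grind)).1
      omega
  simp only [le_sub_self_iff, sum_sub_distrib, sum_const, card_range, nsmul_one] at hsum
  have := (h.redCount_add_three_mul_wSum_sub_mem_Icc (red := red)).1
  have hcolors := redCount_add_blueCount red C
  have hK := h.two_le
  rw [h.card_eq] at hcolors
  push_cast [Nat.cast_sub hK] at hsum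
  zify at hcolors
  linarith

end AltTrace

end Counting

section ZeroSkipSets

variable {V : Type*} [DecidableEq V] {G : SimpleGraph V} {red : Sym2 V → Bool}
  {M : Finset (Sym2 V)} {𝒞 : Finset (Finset (Sym2 V))}

theorem hasZeroSkipSet_of_sum_eq_zero {ι : Type*} {J : Finset ι} (hJ : J.Nonempty)
    (T : ι → SkipOn G red M 𝒞) (hdisj : ∀ i ∈ J, ∀ j ∈ J, i ≠ j → (T i).Disj (T j))
    (hsum : ∑ i ∈ J, (T i).S.w = 0) : HasZeroSkipSet G red M 𝒞 := by
  refine ⟨J.toList.map T, by simpa using hJ.ne_empty, ?_, ?_⟩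
  · rw [List.pairwise_map]
    exact J.nodup_toList.pairwise_of_forall_ne fun i hi j hj =>
      hdisj i (mem_toList.1 hi) j (mem_toList.1 hj)
  · rw [List.map_map, ← hsum]
    exact sum_map_toList J _

theorem AltTrace.skip_disj {C : Finset (Sym2 V)} {K : ℕ} {c : ℕ → V} (h : AltTrace G M C K c)
    {S₁ S₂ : Skip G red M C} {i₁ j₁ i₂ j₂ : ℕ} (hij₁ : i₁ ≤ j₁) (hij₂ : i₂ ≤ j₂)
    (hj₁ : j₁ < 2 * K) (hj₂ : j₂ < 2 * K) (h₁ : S₁.In (seqArc c i₁ j₁))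
    (h₂ : S₂.In (seqArc c i₂ j₂)) (hsep : j₁ ≤ i₂ ∨ j₂ ≤ i₁) : S₁.Disj S₂ :=
  ⟨_, _, h.seqArc_subset hj₁.le, h.seqArc_subset hj₂.le,
    hsep.elim (h.disjoint_seqArc · hj₂.le) fun hji => (h.disjoint_seqArc hji hj₁.le).symm,
    h.isAltPath_seqArc hij₁ hj₁, h.isAltPath_seqArc hij₂ hj₂, h₁, h₂⟩

/-- With the cycles of `𝒞` traced by `c` with half-lengths `K`, the skip `T` is contained in the
path that starts with the stretch `x` and ends with the stretch `y` of its cycle. -/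
def SkipOn.Within (K : Finset (Sym2 V) → ℕ) (c : Finset (Sym2 V) → ℕ → V)
    (T : SkipOn G red M 𝒞) (x y : ℕ) : Prop :=
  x ≤ y ∧ y + 2 < K T.C ∧ T.S.In (seqArc (c T.C) (2 * x + 1) (2 * y + 4))

variable {K : Finset (Sym2 V) → ℕ} {c : Finset (Sym2 V) → ℕ → V}

theorem SkipOn.Within.disj (h : ∀ C ∈ 𝒞, AltTrace G M C (K C) (c C)) {T₁ T₂ : SkipOn G red M 𝒞}
    {x₁ y₁ x₂ y₂ : ℕ} (h₁ : T₁.Within K c x₁ y₁) (h₂ : T₂.Within K c x₂ y₂)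
    (hsep : y₁ + 2 ≤ x₂ ∨ y₂ + 2 ≤ x₁) : T₁.Disj T₂ := by
  obtain ⟨C₁, hC₁, S₁⟩ := T₁
  obtain ⟨C₂, hC₂, S₂⟩ := T₂
  by_cases hC : C₁ = C₂
  · subst hC
    obtain ⟨hxy₁, hy₁, hin₁⟩ := h₁
    obtain ⟨hxy₂, hy₂, hin₂⟩ := h₂
    dsimp only at *
    refine .inr ⟨rfl, (h C₁ hC₁).skip_disj ?_ ?_ ?_ ?_ hin₁ hin₂ ?_⟩
    all_goals omega
  · exact .inl hC

theorem exists_skips_within (h : ∀ C ∈ 𝒞, AltTrace G M C (K C) (c C)) (hM : IsMatching M) {α : ℕ}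
    (hα : ∀ s : Finset V, G.IsIndepSet s → #s ≤ α) {C : Finset (Sym2 V)} (hC : C ∈ 𝒞)
    {A : Finset ℕ} (hA : A ⊆ range (K C - 2)) {m : ℕ} (hAm : 2 * (m * 4 ^ α) ≤ #A) :
    ∃ (T : Fin m → SkipOn G red M 𝒞) (x y : Fin m → ℕ),
      (∀ i, x i ∈ A) ∧ (∀ i, y i ∈ A) ∧
      (∀ i, (T i).Within K c (x i) (y i)) ∧ (∀ i j, i < j → y i + 2 ≤ x j) ∧
      ∀ i, (T i).S.w + stretchWeight red M (c C) (x i) + stretchWeight red M (c C) (y i) ∈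
        Set.Icc 0 2 := by
  replace hA : ∀ x ∈ A, x + 2 < K C := fun x hx => by
    have := mem_range.1 (hA hx)
    omega
  have inj : ∀ d, d ≤ 4 → Set.InjOn (fun x => c C (2 * x + d)) A := fun d hd i hi j hj hij => by
    have := hA i hi
    have := hA j hj
    have := (h C hC).injOn (show _ < 2 * K C by omega) (show _ < 2 * K C by omega) hij
    omega
  obtain ⟨x, y, hx, hy, hxy, hadj, hsep⟩ := exists_separated_edges
    (H := G.comap (fun x => c C (2 * x + 1)) ⊓ G.comap (fun x => c C (2 * x + 4)))
    (fun S hS hindep => card_lt_of_isIndepSet_comap_inf_comap hα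
      ((inj 1 (by omega)).mono hS) ((inj 4 le_rfl).mono hS) hindep) hAm
  choose S hin hw using fun i => (h C hC).exists_skip (red := red) hM (hxy i) (hA _ (hy i))
    (hadj i).1 (hadj i).2
  exact ⟨fun i => ⟨C, hC, S i⟩, x, y, hx, hy,
    fun i => ⟨by have := hxy i; omega, hA _ (hy i), hin i⟩, hsep, hw⟩

end ZeroSkipSets

section Assembly

theorem card_le_indepNum {V : Type*} [Finite V] {G : SimpleGraph V} {s : Finset V}
    (hs : G.IsIndepSet s) : #s ≤ indepNum G := by
  have := Fintype.ofFinite V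
  exact le_csSup ⟨Fintype.card V, by rintro _ ⟨s, rfl, -⟩; exact card_le_univ s⟩ ⟨s, rfl, hs⟩

theorem exists_lt_card_filter {ι : Type*} [DecidableEq ι] {𝒞 : Finset (Finset ι)}
    {p : ι → Prop} [DecidablePred p] {b : ℕ} (h : #𝒞 * b < #{e ∈ 𝒞.biUnion id | p e}) :
    ∃ C ∈ 𝒞, b < #{e ∈ C | p e} := by
  by_contra! hle
  rw [filter_biUnion] at h
  exact h.not_ge (card_biUnion_le_card_mul _ _ _ hle)

variable {V : Type*} [DecidableEq V] {G : SimpleGraph V} {red : Sym2 V → Bool}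
  {M : Finset (Sym2 V)} {𝒞 : Finset (Finset (Sym2 V))} {K : Finset (Sym2 V) → ℕ}
  {c : Finset (Sym2 V) → ℕ → V} {α : ℕ}

theorem hasZeroSkipSet_of_nonpos_of_nonneg {ι : Type*} [Fintype ι]
    (T : ι ⊕ ι → SkipOn G red M 𝒞) (hdisj : ∀ i j, i ≠ j → (T i).Disj (T j))
    (hι : 4 * 4 < Fintype.card ι) (hneg : ∀ i, (T (.inl i)).S.w ≤ 0)
    (hpos : ∀ i, 0 ≤ (T (.inr i)).S.w) : HasZeroSkipSet G red M 𝒞 := by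
  have hcard : ∀ f : ι ↪ ι ⊕ ι, ∀ q : ι ⊕ ι → Prop, ∀ [DecidablePred q], (∀ i, q (f i)) →
      4 * 4 < #{i | q i} := fun f q _ hq =>
    (hι.trans_eq (by rw [card_map, card_univ])).trans_le
      (card_le_card (s := univ.map f) fun i hi => by
        obtain ⟨i, -, rfl⟩ := mem_map.1 hi
        simpa using hq i)
  obtain ⟨J, -, hJ, hsum⟩ := exists_nonempty_sum_eq_zero (I := univ) (w := fun i => (T i).S.w)
    (b := 4) (fun i _ => (T i).S.hwbound) (hcard .inl _ hneg) (hcard .inr _ hpos)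
  exact hasZeroSkipSet_of_sum_eq_zero hJ T (fun i _ j _ => hdisj i j) hsum

-- The number `17 = 4 * 4 + 1` of skips of each sign is what the bound `|w(S)| ≤ 4` requires.
theorem hasZeroSkipSet_of_separated (h : ∀ C ∈ 𝒞, AltTrace G M C (K C) (c C)) (hM : IsMatching M)
    (hα : ∀ s : Finset V, G.IsIndepSet s → #s ≤ α) {C₁ C₂ : Finset (Sym2 V)} (hC₁ : C₁ ∈ 𝒞)
    (hC₂ : C₂ ∈ 𝒞) {A B : Finset ℕ}
    (hA : A ⊆ {x ∈ range (K C₁ - 2) | 1 ≤ stretchWeight red M (c C₁) x})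
    (hB : B ⊆ {x ∈ range (K C₂ - 2) | stretchWeight red M (c C₂) x ≤ 0})
    (hAcard : 2 * (17 * 4 ^ α) ≤ #A) (hBcard : 2 * (17 * 4 ^ α) ≤ #B)
    (hsep : (∀ x ∈ A, ∀ y ∈ B, x + 2 ≤ y) ∨ ∀ x ∈ A, ∀ y ∈ B, y + 2 ≤ x) :
    HasZeroSkipSet G red M 𝒞 := by
  obtain ⟨T₁, x₁, y₁, hx₁, hy₁, hin₁, hsep₁, hw₁⟩ :=
    exists_skips_within (red := red) h hM hα hC₁ (hA.trans (filter_subset _ _)) hAcard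
  obtain ⟨T₂, x₂, y₂, hx₂, hy₂, hin₂, hsep₂, hw₂⟩ :=
    exists_skips_within (red := red) h hM hα hC₂ (hB.trans (filter_subset _ _)) hBcard
  have hdisj : ∀ i j, (T₁ i).Disj (T₂ j) ∧ (T₂ j).Disj (T₁ i) := fun i j => by
    have := hsep.imp (fun hs => hs _ (hy₁ i) _ (hx₂ j)) fun hs => hs _ (hx₁ i) _ (hy₂ j)
    exact ⟨(hin₁ i).disj h (hin₂ j) this, (hin₂ j).disj h (hin₁ i) this.symm⟩
  refine hasZeroSkipSet_of_nonpos_of_nonneg (Sum.elim T₁ T₂) ?_ (by simp) (fun i => ?_)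
    fun i => ?_
  · rintro (i | i) (j | j) hij
    · exact (hin₁ i).disj h (hin₁ j)
        ((lt_or_gt_of_ne (by simpa using hij)).imp (hsep₁ i j) (hsep₁ j i))
    · exact (hdisj i j).1
    · exact (hdisj j i).2
    · exact (hin₂ i).disj h (hin₂ j)
        ((lt_or_gt_of_ne (by simpa using hij)).imp (hsep₂ i j) (hsep₂ j i))
  · have := (hw₁ i).2
    have := (mem_filter.1 (hA (hx₁ i))).2
    have := (mem_filter.1 (hA (hy₁ i))).2
    simp only [Sum.elim_inl]
    omega
  · have := (hw₂ i).1
    have := (mem_filter.1 (hB (hx₂ i))).2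
    have := (mem_filter.1 (hB (hy₂ i))).2
    simp only [Sum.elim_inr]
    omega

theorem hasZeroSkipSet_of_le_redCount_of_le_blueCount (h𝒞 : ∀ C ∈ 𝒞, IsAltCycle G M C)
    (hM : IsMatching M) (hα : ∀ s : Finset V, G.IsIndepSet s → #s ≤ α) {C₁ C₂ : Finset (Sym2 V)}
    (hC₁ : C₁ ∈ 𝒞) (hC₂ : C₂ ∈ 𝒞)
    (hred : 272 * 4 ^ α + 12 ≤ redCount red C₁ + 3 * wSum red M C₁)
    (hblue : 272 * 4 ^ α + 12 ≤ blueCount red C₂ - 3 * wSum red M C₂) :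
    HasZeroSkipSet G red M 𝒞 := by
  obtain ⟨v, -⟩ := h𝒞 C₁ hC₁
  have : Nonempty V := ⟨v⟩
  choose! K c h using fun C hC => (h𝒞 C hC).exists_altTrace
  have hpos : 2 * (2 * (17 * 4 ^ α)) + 1 ≤
      #{x ∈ range (K C₁ - 2) | 1 ≤ stretchWeight red M (c C₁) x} := by
    zify
    linarith [(h C₁ hC₁).redCount_le_card_filter_one_le (red := red)]
  have hnonpos : 2 * (2 * (17 * 4 ^ α)) + 1 ≤
      #{x ∈ range (K C₂ - 2) | stretchWeight red M (c C₂) x ≤ 0} := by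
    zify
    linarith [(h C₂ hC₂).blueCount_le_card_filter_nonpos (red := red)]
  obtain ⟨A, hA, B, hB, hAcard, hBcard, hsep⟩ := exists_separated_subsets hpos hnonpos
  exact hasZeroSkipSet_of_separated h hM hα hC₁ hC₂ hA hB hAcard hBcard hsep

theorem many_red_blue_gives_zero_skip_set_general
    {V : Type*} [DecidableEq V] (G : SimpleGraph V) (red : Sym2 V → Bool) (α t : ℕ)
    (hα : ∀ s : Finset V, G.IsIndepSet s → #s ≤ α) (ht : 8 * 4 ^ α ≤ t)
    (M : Finset (Sym2 V)) (hM : IsMatching M)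
    (𝒞 : Finset (Finset (Sym2 V))) (h𝒞 : ∀ C ∈ 𝒞, IsAltCycle G M C)
    (hfew : 𝒞.card ≤ 10 * t ^ 3)
    (heach : ∀ C ∈ 𝒞, |wSum red M C| ≤ (2 * t : ℤ))
    (hblue : 1000 * t ^ 6 ≤ blueCount red (𝒞.biUnion id))
    (hred : 1000 * t ^ 6 ≤ redCount red (𝒞.biUnion id)) :
    HasZeroSkipSet G red M 𝒞 := by
  have hα₁ : 1 ≤ 4 ^ α := Nat.one_le_pow _ _ (by norm_num)
  have ht₁ : 1 ≤ t := by omega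
  have htt : t ≤ t ^ 3 := Nat.le_self_pow (by norm_num) t
  have hfew' : #𝒞 * (99 * t ^ 3) < 1000 * t ^ 6 := calc
    _ ≤ 10 * t ^ 3 * (99 * t ^ 3) := Nat.mul_le_mul_right _ hfew
    _ = 990 * t ^ 6 := by ring
    _ < 1000 * t ^ 6 := Nat.mul_lt_mul_of_pos_right (by norm_num) (pow_pos ht₁ 6)
  obtain ⟨C₁, hC₁, hred₁⟩ := exists_lt_card_filter (hfew'.trans_le hred)
  obtain ⟨C₂, hC₂, hblue₂⟩ := exists_lt_card_filter (hfew'.trans_le hblue)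
  rw [← redCount] at hred₁
  rw [← blueCount] at hblue₂
  have hw₁ := abs_le.1 (heach C₁ hC₁)
  have hw₂ := abs_le.1 (heach C₂ hC₂)
  zify at hα₁ ht htt hred₁ hblue₂
  exact hasZeroSkipSet_of_le_redCount_of_le_blueCount h𝒞 hM hα hC₁ hC₂ (by linarith) (by linarith)

end Assembly

/-- Not many red and blue edges: let `t ≥ 8·4^α` and `𝒞` a set of vertex-disjoint
`M`-alternating cycles with `|𝒞| ≤ 10t³`, `|w_M(C)| ≤ 2t` for every `C ∈ 𝒞`, whose cycles
contain at least `1000t⁶` blue and at least `1000t⁶` red edges in total. Then `𝒞` contains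
a 0-skip set. -/
theorem many_red_blue_gives_zero_skip_set
    {V : Type*} [Fintype V] [DecidableEq V] (G : SimpleGraph V) (red : Sym2 V → Bool)
    (t : ℕ) (ht : 8 * 4 ^ indepNum G ≤ t)
    (M : Finset (Sym2 V)) (hM : IsPM G M)
    (𝒞 : Finset (Finset (Sym2 V))) (h𝒞 : IsAltCycleSet G M 𝒞)
    (hfew : 𝒞.card ≤ 10 * t ^ 3)
    (heach : ∀ C ∈ 𝒞, |wSum red M C| ≤ (2 * t : ℤ))
    (hblue : 1000 * t ^ 6 ≤ blueCount red (𝒞.biUnion id))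
    (hred : 1000 * t ^ 6 ≤ redCount red (𝒞.biUnion id)) :
    HasZeroSkipSet G red M 𝒞 := by
  exact many_red_blue_gives_zero_skip_set_general G red _ t (fun _ => card_le_indepNum) ht M
    hM.isMatching 𝒞 h𝒞.1 hfew heach hblue hred
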